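/- arXiv:2504.07330 — 8 statements merged into one kernel-verified Lean document; each statement's English description precedes it below -/
import Mathlib

section
/- Let U and V be n×p real matrices with 1 ≤ p < n such that VᵀU is invertible. Then ‖I − U(VᵀU)⁻¹Vᵀ‖₂ = ‖U(VᵀU)⁻¹Vᵀ‖₂. -/
open Matrix

/-- Spectral norm of a rectangular real matrix: the operator norm of the induced
linear map between Euclidean spaces. -/
noncomputable def specNorm {m k : ℕ} (M : Matrix (Fin m) (Fin k) ℝ) : ℝ :=
  ‖LinearMap.toContinuousLinearMap (Matrix.toEuclideanLin M)‖

/-!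
The matrix `P = U (VᵀU)⁻¹ Vᵀ` is idempotent; it is nonzero because `P U = U` and `U ≠ 0`, and it is
not the identity because its rank is at most `p < n`. So the claim is the classical fact that a
nontrivial (oblique) projection `P` on an inner product space satisfies `‖1 - P‖ = ‖P‖`.

By symmetry it suffices to prove `‖1 - P‖ ≤ ‖P‖` (`norm_one_sub_le_of_idempotent`). Split `x = u + v`
with `u = P x`, `v = (1 - P) x`. If both are nonzero, exchanging their lengths gives
`y = (‖v‖ / ‖u‖) u + (‖u‖ / ‖v‖) v`, which has the same norm as `x` since the inner product of the two
summands is unchanged, while `‖P y‖ = ‖v‖`. Hence `‖v‖ ≤ ‖P‖ ‖x‖`.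
-/

lemma norm_one_sub_le_of_idempotent {E : Type*} [NormedAddCommGroup E] [InnerProductSpace ℝ E]
    (P : E →L[ℝ] E) (hP : P * P = P) (h0 : P ≠ 0) : ‖1 - P‖ ≤ ‖P‖ := by
  have hPP : ∀ x, P (P x) = P x := fun x => congrArg (fun T : E →L[ℝ] E => T x) hP
  have h1 : 1 ≤ ‖P‖ := by
    have h := norm_mul_le P P
    rw [hP] at h
    have hpos : 0 < ‖P‖ := norm_pos_iff.mpr h0
    nlinarith
  refine ContinuousLinearMap.opNorm_le_bound _ (norm_nonneg _) fun x => ?_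
  change ‖x - P x‖ ≤ _
  by_cases hu : P x = 0
  · rw [hu, sub_zero]
    nlinarith [norm_nonneg x]
  by_cases hv : x - P x = 0
  · rw [hv, norm_zero]
    positivity
  have hPv : P (x - P x) = 0 := by rw [map_sub, hPP, sub_self]
  have hx : P x + (x - P x) = x := by abel
  have hPu := hPP x
  generalize x - P x = v at *
  generalize P x = u at *
  have hu' : ‖u‖ ≠ 0 := norm_ne_zero_iff.mpr hu
  have hv' : ‖v‖ ≠ 0 := norm_ne_zero_iff.mpr hv
  set y : E := (‖v‖ / ‖u‖) • u + (‖u‖ / ‖v‖) • v with hy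
  have hPy : ‖P y‖ = ‖v‖ := by
    rw [hy, map_add, map_smul, map_smul, hPu, hPv, smul_zero, add_zero, norm_smul, norm_div,
      norm_norm, norm_norm, div_mul_cancel₀ _ hu']
  have hyx : ‖y‖ = ‖x‖ := by
    rw [← sq_eq_sq₀ (norm_nonneg _) (norm_nonneg _), hy, ← hx, norm_add_sq_real, norm_add_sq_real,
      norm_smul, norm_smul, real_inner_smul_left, real_inner_smul_right, norm_div, norm_div,
      norm_norm, norm_norm]
    field_simp
    ring
  rw [← hPy, ← hyx]
  exact P.le_opNorm y

theorem stmt3 {n p : ℕ} (hp : 1 ≤ p) (hpn : p < n)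
    (U V : Matrix (Fin n) (Fin p) ℝ) (hUV : IsUnit (Vᵀ * U)) :
    specNorm ((1 : Matrix (Fin n) (Fin n) ℝ) - U * (Vᵀ * U)⁻¹ * Vᵀ)
      = specNorm (U * (Vᵀ * U)⁻¹ * Vᵀ) := by
  have hdet : IsUnit (Vᵀ * U).det := (Matrix.isUnit_iff_isUnit_det _).mp hUV
  have hPU : U * (Vᵀ * U)⁻¹ * Vᵀ * U = U := by
    rw [Matrix.mul_assoc, Matrix.mul_assoc, Matrix.nonsing_inv_mul _ hdet, Matrix.mul_one]
  have hidem : (U * (Vᵀ * U)⁻¹ * Vᵀ) * (U * (Vᵀ * U)⁻¹ * Vᵀ) = U * (Vᵀ * U)⁻¹ * Vᵀ := by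
    rw [← Matrix.mul_assoc, ← Matrix.mul_assoc, hPU]
  have hne0 : U * (Vᵀ * U)⁻¹ * Vᵀ ≠ 0 := by
    intro h
    rw [h, Matrix.zero_mul] at hPU
    -- `U = 0` would make the `p × p` matrix `Vᵀ * U` both zero and invertible.
    have : Nonempty (Fin p) := ⟨⟨0, hp⟩⟩
    rw [← hPU, Matrix.mul_zero] at hUV
    exact not_isUnit_zero hUV
  have hne1 : (1 : Matrix (Fin n) (Fin n) ℝ) - U * (Vᵀ * U)⁻¹ * Vᵀ ≠ 0 := by
    intro h
    have hr : (U * (Vᵀ * U)⁻¹ * Vᵀ).rank ≤ p :=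
      (Matrix.rank_mul_le_right _ _).trans (by simpa using Matrix.rank_le_height Vᵀ)
    rw [← sub_eq_zero.mp h, Matrix.rank_one, Fintype.card_fin] at hr
    omega
  generalize U * (Vᵀ * U)⁻¹ * Vᵀ = P at *
  let φ := Matrix.toEuclideanCLM (n := Fin n) (𝕜 := ℝ)
  change ‖φ (1 - P)‖ = ‖φ P‖
  have hφ : φ P * φ P = φ P := by rw [← map_mul, hidem]
  have hφ1 : φ (1 - P) = 1 - φ P := by rw [map_sub, map_one]
  have hφ0 : φ P ≠ 0 := (map_ne_zero_iff φ φ.injective).mpr hne0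
  have hφ10 : 1 - φ P ≠ 0 := hφ1 ▸ (map_ne_zero_iff φ φ.injective).mpr hne1
  rw [hφ1]
  refine le_antisymm (norm_one_sub_le_of_idempotent _ hφ hφ0) ?_
  have hidem' : (1 - φ P) * (1 - φ P) = 1 - φ P :=
    IsIdempotentElem.one_sub hφ
  simpa using norm_one_sub_le_of_idempotent (1 - φ P) hidem' hφ10
end

section
/- Let g : ℝⁿ → ℝⁿ be differentiable and satisfy the quadratic Taylor bound ‖g(ω) − g(τ) − g′(τ)(ω − τ)‖ ≤ (L/2)‖ω − τ‖² for all ω, τ ∈ ℝⁿ, where L > 0. Let ξ* satisfy g(ξ*) = 0, let ξ ∈ ℝⁿ satisfy ‖ξ − ξ*‖ ≤ 2/L, and let C be an invertible n×n matrix with ‖C⁻¹‖₂ ≤ 1/4 and ‖C − g′(ξ)‖₂ ≤ 1. Then the quasi-Newton iterate ξ₊ = ξ − C⁻¹g(ξ) satisfies ‖ξ₊ − ξ*‖ ≤ (1/2)‖ξ − ξ*‖. -/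
/-!
Write `e = ξ - ξ*` and `G = g′(ξ)`. Since `C⁻¹ C = 1` and `g ξ* = 0`, the new error is
`ξ₊ - ξ* = C⁻¹ ((C - G) e + (g ξ* - g ξ - G (ξ* - ξ)))`.
The first summand has norm at most `‖e‖`; the second, by the Taylor bound based at `ξ`, at most
`L / 2 * ‖e‖ ^ 2 ≤ ‖e‖`, because `‖e‖ ≤ 2 / L`. Multiplying by `‖C⁻¹‖ ≤ 1 / 4` gives `‖e‖ / 2`.
-/

open Matrix

theorem stmt11 {n : ℕ}
    (g : EuclideanSpace ℝ (Fin n) → EuclideanSpace ℝ (Fin n)) (L : ℝ) (hL : 0 < L)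
    (hg : Differentiable ℝ g)
    (hTaylor : ∀ ω τ : EuclideanSpace ℝ (Fin n),
      ‖g ω - g τ - fderiv ℝ g τ (ω - τ)‖ ≤ L / 2 * ‖ω - τ‖ ^ 2)
    (ξstar : EuclideanSpace ℝ (Fin n)) (hstar : g ξstar = 0)
    (ξ : EuclideanSpace ℝ (Fin n)) (hclose : ‖ξ - ξstar‖ ≤ 2 / L)
    (C : Matrix (Fin n) (Fin n) ℝ) (hC : IsUnit C)
    (hCinv : ‖(Matrix.toEuclideanCLM (𝕜 := ℝ) C⁻¹ :
        EuclideanSpace ℝ (Fin n) →L[ℝ] EuclideanSpace ℝ (Fin n))‖ ≤ 1 / 4)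
    (hCG : ‖(Matrix.toEuclideanCLM (𝕜 := ℝ) C :
        EuclideanSpace ℝ (Fin n) →L[ℝ] EuclideanSpace ℝ (Fin n)) - fderiv ℝ g ξ‖ ≤ 1) :
    ‖(ξ - (Matrix.toEuclideanCLM (𝕜 := ℝ) C⁻¹) (g ξ)) - ξstar‖
      ≤ 1 / 2 * ‖ξ - ξstar‖ := by
  set A := Matrix.toEuclideanCLM (n := Fin n) (𝕜 := ℝ) C with hA
  set B := Matrix.toEuclideanCLM (n := Fin n) (𝕜 := ℝ) C⁻¹ with hB
  set G := fderiv ℝ g ξ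
  have hdet : IsUnit C.det := (Matrix.isUnit_iff_isUnit_det C).mp hC
  have hBA : B * A = 1 := by
    rw [hA, hB, ← map_mul, Matrix.nonsing_inv_mul C hdet, map_one]
  have hBAe : B (A (ξ - ξstar)) = ξ - ξstar := by
    have h := congrArg (fun T => T (ξ - ξstar)) hBA
    simpa using h
  have herr : ξ - B (g ξ) - ξstar =
      B ((A - G) (ξ - ξstar) + (g ξstar - g ξ - G (ξstar - ξ))) := by
    have hinner : (A - G) (ξ - ξstar) + (g ξstar - g ξ - G (ξstar - ξ)) =
        A (ξ - ξstar) - g ξ := by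
      rw [hstar, ← neg_sub ξ ξstar, map_neg, _root_.sub_apply]
      abel
    rw [hinner, map_sub, hBAe]
    abel
  have hlin : ‖(A - G) (ξ - ξstar)‖ ≤ 1 * ‖ξ - ξstar‖ :=
    (A - G).le_of_opNorm_le hCG _
  have hrem : ‖g ξstar - g ξ - G (ξstar - ξ)‖ ≤ ‖ξ - ξstar‖ := by
    refine (hTaylor ξstar ξ).trans ?_
    rw [norm_sub_rev ξstar ξ]
    have hle : ‖ξ - ξstar‖ * L ≤ 2 := (le_div_iff₀ hL).mp hclose
    nlinarith [mul_le_mul_of_nonneg_left hle (norm_nonneg (ξ - ξstar))]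
  rw [herr]
  have hBle := B.le_of_opNorm_le hCinv
    ((A - G) (ξ - ξstar) + (g ξstar - g ξ - G (ξstar - ξ)))
  have hsum := norm_add_le ((A - G) (ξ - ξstar)) (g ξstar - g ξ - G (ξstar - ξ))
  linarith
end

section
/- Let X, Z, U, V be n×p real matrices such that I_p + XᵀZ = 0. Then det(I_n + XZᵀ + UVᵀ) = det(−XᵀV · UᵀZ). -/
/-!
Write `X Zᵀ + U Vᵀ` as the product of the block row `[X U]` and the block column `[Zᵀ; Vᵀ]`.
Sylvester's identity `det (1 + A B) = det (1 + B A)` turns the left-hand side into the determinant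
of the `2p × 2p` block matrix `[1 + Zᵀ X, Zᵀ U; Vᵀ X, 1 + Vᵀ U]`. By hypothesis its upper left block
vanishes, so this determinant is `(-1)^p det (Zᵀ U) det (Vᵀ X)`, which is the right-hand side.
-/

open Matrix

/-- Swapping the two block columns makes the matrix block triangular; the swap itself has
determinant `det (-1) = (-1) ^ p`. -/
lemma det_fromBlocks_zero_left {p : ℕ} (B C D : Matrix (Fin p) (Fin p) ℝ) :
    (fromBlocks 0 B C D).det = B.det * (-C).det := by
  have hfac : fromBlocks 0 B C D
      = fromBlocks B 0 D C * (fromBlocks 1 1 1 0 * fromBlocks 1 0 (-1) 1) := by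
    simp [fromBlocks_multiply]
  have hC : (-C).det = C.det * (-1 : Matrix (Fin p) (Fin p) ℝ).det := by
    rw [← det_mul, Matrix.mul_neg, Matrix.mul_one]
  rw [hfac, det_mul, det_mul, det_fromBlocks_zero₁₂, det_fromBlocks_zero₁₂,
    det_fromBlocks_one₁₁, hC]
  simp [mul_assoc]

theorem stmt12 {n p : ℕ} (X Z U V : Matrix (Fin n) (Fin p) ℝ)
    (h : (1 : Matrix (Fin p) (Fin p) ℝ) + Xᵀ * Z = 0) :
    ((1 : Matrix (Fin n) (Fin n) ℝ) + X * Zᵀ + U * Vᵀ).det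
      = ((-(Xᵀ * V)) * (Uᵀ * Z)).det := by
  have hT : (1 : Matrix (Fin p) (Fin p) ℝ) + Zᵀ * X = 0 := by
    simpa using congrArg transpose h
  have hB : (Zᵀ * U).det = (Uᵀ * Z).det := by
    rw [← det_transpose, transpose_mul, transpose_transpose]
  have hC : (-(Vᵀ * X)).det = (-(Xᵀ * V)).det := by
    rw [← det_transpose, transpose_neg, transpose_mul, transpose_transpose]
  have hblock : (1 : Matrix (Fin p ⊕ Fin p) (Fin p ⊕ Fin p) ℝ) + fromRows Zᵀ Vᵀ * fromCols X U
      = fromBlocks 0 (Zᵀ * U) (Vᵀ * X) (1 + Vᵀ * U) := by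
    rw [fromRows_mul_fromCols, ← fromBlocks_one, fromBlocks_add, hT, zero_add, zero_add]
  rw [add_assoc, ← fromCols_mul_fromRows, det_one_add_mul_comm, hblock,
    det_fromBlocks_zero_left, hB, hC, det_mul, mul_comm]
end

section
/- Let B be a symmetric positive definite n×n real matrix and let ε satisfy 0 < ε ≤ 1/tr(B⁻¹). Then det(B + εI) − det(B) ≤ 2ε · det(B) · tr(B⁻¹). -/
open Matrix

/-!
Factor `B + ε I = B (I + ε B⁻¹)`. If `μ i > 0` are the eigenvalues of `B⁻¹`, then
`det (I + ε B⁻¹) = ∏ (1 + ε μ i) ≤ exp (ε tr B⁻¹)`. Since `x = ε tr B⁻¹` lies in `[0, 1]`,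
`exp x ≤ 1 + x + x² ≤ 1 + 2 x`; multiplying by `det B > 0` gives the bound.
-/

lemma det_one_add_smul_eq_prod {n : ℕ} {C : Matrix (Fin n) (Fin n) ℝ} (hC : C.IsHermitian)
    (ε : ℝ) :
    (1 + ε • C).det = ∏ i, (1 + ε * hC.eigenvalues i) := by
  set U : Matrix (Fin n) (Fin n) ℝ := hC.eigenvectorUnitary.1
  have hUU : U * star U = 1 := Unitary.coe_mul_star_self hC.eigenvectorUnitary
  have hs : C = U * diagonal hC.eigenvalues * star U := by
    simpa [Unitary.conjStarAlgAut_apply, Function.comp_def] using hC.spectral_theorem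
  have h : 1 + ε • C = U * (1 + ε • diagonal hC.eigenvalues) * star U := by
    rw [mul_add, add_mul, mul_one, hUU, Matrix.mul_smul, Matrix.smul_mul, ← hs]
  have hd : (1 + ε • diagonal hC.eigenvalues : Matrix (Fin n) (Fin n) ℝ)
      = diagonal fun i => 1 + ε * hC.eigenvalues i := by
    rw [← diagonal_one, ← diagonal_smul, diagonal_add]
    rfl
  rw [h, det_mul_right_comm, hUU, one_mul, hd, det_diagonal]

lemma det_one_add_smul_le_exp {n : ℕ} {C : Matrix (Fin n) (Fin n) ℝ} (hC : C.PosSemidef)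
    {ε : ℝ} (hε : 0 ≤ ε) :
    (1 + ε • C).det ≤ Real.exp (ε * C.trace) := by
  rw [det_one_add_smul_eq_prod hC.isHermitian, hC.isHermitian.trace_eq_sum_eigenvalues,
    Finset.mul_sum, Real.exp_sum]
  refine Finset.prod_le_prod (fun i _ => ?_) fun i _ => ?_
  · have := mul_nonneg hε (hC.eigenvalues_nonneg i)
    linarith
  · simpa [add_comm] using Real.add_one_le_exp (ε * hC.isHermitian.eigenvalues i)

theorem stmt13 {n : ℕ} (B : Matrix (Fin n) (Fin n) ℝ) (hB : B.PosDef)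
    (ε : ℝ) (hε0 : 0 < ε) (hε1 : ε ≤ 1 / Matrix.trace B⁻¹) :
    (B + ε • (1 : Matrix (Fin n) (Fin n) ℝ)).det - B.det
      ≤ 2 * ε * B.det * Matrix.trace B⁻¹ := by
  have hdet : 0 < B.det := hB.det_pos
  -- The trace cannot vanish: `1 / 0 = 0` would contradict `0 < ε`, which excludes `n = 0`.
  have ht : 0 < Matrix.trace B⁻¹ := one_div_pos.mp (hε0.trans_le hε1)
  have hx1 : ε * Matrix.trace B⁻¹ ≤ 1 := (le_div_iff₀ ht).mp hε1
  have hx0 : 0 < ε * Matrix.trace B⁻¹ := mul_pos hε0 ht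
  have hfac : B + ε • (1 : Matrix (Fin n) (Fin n) ℝ) = B * (1 + ε • B⁻¹) := by
    rw [mul_add, mul_one, Matrix.mul_smul, mul_nonsing_inv B hdet.ne'.isUnit]
  have hle := det_one_add_smul_le_exp hB.inv.posSemidef hε0.le
  have hexp := (abs_le.mp (Real.abs_exp_sub_one_sub_id_le
    (abs_le.mpr ⟨by linarith, hx1⟩))).2
  have hb : (1 + ε • B⁻¹).det ≤ 1 + 2 * (ε * Matrix.trace B⁻¹) := by nlinarith
  rw [hfac, det_mul]
  nlinarith [mul_le_mul_of_nonneg_left hb hdet.le]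
end

section
/- Let B be an invertible n×n real matrix and let S, Y be n×q real matrices such that SᵀBS and YᵀS are invertible. Then det(B − BS(SᵀBS)⁻¹SᵀB + Y(YᵀS)⁻¹Yᵀ) = det(B) · det(SᵀY) · det((SᵀBS)⁻¹). -/
/-!
Write `M = SᵀBS` and `P = YᵀS`. The proof factors the update through the simpler matrix
`C = B + (Y - BS) M⁻¹ SᵀB`, which satisfies the same secant equation `C S = Y`. The update differs
from `C` by `Y K = C S K` with `K = M⁻¹ SᵀB - P⁻¹ Yᵀ`, so it equals `C (1 - S K)`. Since `K S = 0`,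
Sylvester's identity `det (1 - S K) = det (1 - K S)` shows that the second factor has determinant
`1`, while the matrix determinant lemma gives `det C = det B * det (M⁻¹ SᵀY)`.
-/

open Matrix

theorem stmt14 {n q : ℕ} (B : Matrix (Fin n) (Fin n) ℝ) (hB : IsUnit B)
    (S Y : Matrix (Fin n) (Fin q) ℝ)
    (h1 : IsUnit (Sᵀ * B * S)) (h2 : IsUnit (Yᵀ * S)) :
    (B - B * S * (Sᵀ * B * S)⁻¹ * Sᵀ * B + Y * (Yᵀ * S)⁻¹ * Yᵀ).det
      = B.det * (Sᵀ * Y).det * ((Sᵀ * B * S)⁻¹).det := by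
  have hBd := (Matrix.isUnit_iff_isUnit_det _).mp hB
  have hM := Matrix.nonsing_inv_mul _ ((Matrix.isUnit_iff_isUnit_det _).mp h1)
  have hP := Matrix.nonsing_inv_mul _ ((Matrix.isUnit_iff_isUnit_det _).mp h2)
  set W := (Sᵀ * B * S)⁻¹
  set V := (Yᵀ * S)⁻¹
  have hWS : W * Sᵀ * B * S = 1 := by simpa only [Matrix.mul_assoc] using hM
  have hVS : V * Yᵀ * S = 1 := by simpa only [Matrix.mul_assoc] using hP
  have hKS : (W * Sᵀ * B - V * Yᵀ) * S = 0 := by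
    rw [Matrix.sub_mul, hWS, hVS, sub_self]
  have hCS : (B + (Y - B * S) * (W * Sᵀ * B)) * S = Y := by
    rw [Matrix.add_mul, Matrix.mul_assoc (Y - B * S), hWS, Matrix.mul_one, add_sub_cancel]
  have hfac : B - B * S * W * Sᵀ * B + Y * V * Yᵀ
      = (B + (Y - B * S) * (W * Sᵀ * B)) * (1 - S * (W * Sᵀ * B - V * Yᵀ)) := by
    rw [Matrix.mul_sub, Matrix.mul_one, ← Matrix.mul_assoc _ S, hCS]
    simp only [Matrix.sub_mul, Matrix.mul_sub, Matrix.mul_assoc]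
    abel
  have hcap : 1 + W * Sᵀ * B * B⁻¹ * (Y - B * S) = W * (Sᵀ * Y) := by
    rw [Matrix.mul_nonsing_inv_cancel_right _ _ hBd, Matrix.mul_sub, ← Matrix.mul_assoc _ B S,
      hWS, add_sub_cancel, Matrix.mul_assoc]
  rw [hfac, Matrix.det_mul, Matrix.det_one_sub_mul_comm, hKS, sub_zero, Matrix.det_one, mul_one,
    Matrix.det_add_mul _ _ hBd, hcap, Matrix.det_mul]
  ring
end

section
/- Let B be an invertible n×n real matrix and let S, Y be n×q real matrices such that SᵀS and SᵀB⁻¹Y are invertible. Then the multisecant Broyden update B₊ = B + (Y − BS)(SᵀS)⁻¹Sᵀ is invertible, with B₊⁻¹ = B⁻¹ − (B⁻¹Y − S)(SᵀB⁻¹Y)⁻¹SᵀB⁻¹. -/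
open Matrix

/-! Write `X` for the claimed inverse, `D = Y - B * S`, `H = (Sᵀ * B⁻¹ * Y)⁻¹` and
`W = Sᵀ * B⁻¹`. Since `B⁻¹ * Y - S = B⁻¹ * D`, one gets `B * X = 1 - D * H * W`, while
`Sᵀ * (B⁻¹ * Y) * H = 1` gives `Sᵀ * X = Sᵀ * S * H * W`. Hence the rank-`q` correction contributes
`D * (Sᵀ * S)⁻¹ * Sᵀ * X = D * H * W`, so `B₊ * X = 1`; for square matrices a right inverse is
the inverse. -/

theorem stmt16 {n q : ℕ} (B : Matrix (Fin n) (Fin n) ℝ) (hB : IsUnit B)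
    (S Y : Matrix (Fin n) (Fin q) ℝ)
    (h1 : IsUnit (Sᵀ * S)) (h2 : IsUnit (Sᵀ * B⁻¹ * Y)) :
    IsUnit (B + (Y - B * S) * (Sᵀ * S)⁻¹ * Sᵀ) ∧
    (B + (Y - B * S) * (Sᵀ * S)⁻¹ * Sᵀ)⁻¹
      = B⁻¹ - (B⁻¹ * Y - S) * (Sᵀ * B⁻¹ * Y)⁻¹ * Sᵀ * B⁻¹ := by
  have hBB : B * B⁻¹ = 1 := mul_nonsing_inv _ ((isUnit_iff_isUnit_det _).1 hB)
  have hG : (Sᵀ * S)⁻¹ * (Sᵀ * S) = 1 := nonsing_inv_mul _ ((isUnit_iff_isUnit_det _).1 h1)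
  have hH : (Sᵀ * B⁻¹ * Y) * (Sᵀ * B⁻¹ * Y)⁻¹ = 1 :=
    mul_nonsing_inv _ ((isUnit_iff_isUnit_det _).1 h2)
  set G := (Sᵀ * S)⁻¹
  set H := (Sᵀ * B⁻¹ * Y)⁻¹
  set X := B⁻¹ - (B⁻¹ * Y - S) * H * Sᵀ * B⁻¹ with hX
  have hBX : B * X = 1 - (Y - B * S) * H * Sᵀ * B⁻¹ := by
    have hD : B * (B⁻¹ * Y - S) = Y - B * S := by
      rw [Matrix.mul_sub, ← Matrix.mul_assoc, hBB, Matrix.one_mul]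
    rw [hX, Matrix.mul_sub, hBB, ← hD]
    simp only [Matrix.mul_assoc]
  have hSX : Sᵀ * X = Sᵀ * S * (H * Sᵀ * B⁻¹) := by
    have hE : Sᵀ * (B⁻¹ * Y - S) * H = 1 - Sᵀ * S * H := by
      rw [Matrix.mul_sub, ← Matrix.mul_assoc, Matrix.sub_mul, hH]
    calc Sᵀ * X = Sᵀ * B⁻¹ - Sᵀ * (B⁻¹ * Y - S) * H * (Sᵀ * B⁻¹) := by
          rw [hX, Matrix.mul_sub]; simp only [Matrix.mul_assoc]
      _ = Sᵀ * S * (H * Sᵀ * B⁻¹) := by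
          rw [hE, Matrix.sub_mul, Matrix.one_mul, sub_sub_cancel]
          simp only [Matrix.mul_assoc]
  have key : (B + (Y - B * S) * G * Sᵀ) * X = 1 := by
    rw [Matrix.add_mul, hBX, Matrix.mul_assoc _ Sᵀ X, hSX, Matrix.mul_assoc _ G,
      ← Matrix.mul_assoc G, hG, Matrix.one_mul]
    simp only [Matrix.mul_assoc, sub_add_cancel]
  exact ⟨(isUnit_iff_isUnit_det _).2 (isUnit_det_of_right_inverse key), inv_eq_right_inv key⟩
end

section
/- Let B be a symmetric positive definite n×n real matrix and let S be an n×q real matrix of full column rank q. Then the matrix M = (SᵀBS)⁻¹(SᵀB²S) has real positive eigenvalues and satisfies q − tr(M) + ln det(M) ≤ 0. -/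
/-!
The matrix `(SᵀBS)⁻¹` is positive definite, hence of the form `Rᴴ * R` with `R` invertible, so
`(SᵀBS)⁻¹ (SᵀB²S) = Rᴴ (R SᵀB²S)` has the same characteristic polynomial, trace and determinant as
the positive definite matrix `N = (R SᵀB²S) Rᴴ`. The roots of the characteristic polynomial
are therefore the positive real eigenvalues `λᵢ` of `N`, and the quantity to bound is
`∑ᵢ (1 - λᵢ + ln λᵢ)`, which is nonpositive because `ln x ≤ x - 1` for `x > 0`.
-/

open Matrix

/-- A matrix of full column rank acts injectively, by rank-nullity. -/
lemma mulVec_injective_of_rank_eq {n q : ℕ} {S : Matrix (Fin n) (Fin q) ℝ} (hS : S.rank = q) :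
    Function.Injective S.mulVec := by
  have h := S.mulVecLin.finrank_range_add_finrank_ker
  rw [Module.finrank_fin_fun] at h
  have hk : Module.finrank ℝ (LinearMap.ker S.mulVecLin) = 0 := by
    unfold Matrix.rank at hS
    omega
  exact LinearMap.ker_eq_bot.mp (Submodule.finrank_eq_zero.mp hk)

open scoped MatrixOrder in
/-- With `A⁻¹ = Rᴴ * R`, moving `Rᴴ` to the other side of `A⁻¹ * C` gives `N = R * C * Rᴴ`, a
congruence of `C`. -/
lemma exists_posDef_similar {q : ℕ} {A C : Matrix (Fin q) (Fin q) ℝ} (hA : A.PosDef)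
    (hC : C.PosDef) : ∃ N : Matrix (Fin q) (Fin q) ℝ, N.PosDef ∧
      (A⁻¹ * C).charpoly = N.charpoly ∧ (A⁻¹ * C).trace = N.trace ∧ (A⁻¹ * C).det = N.det := by
  obtain ⟨R, hR⟩ := CStarAlgebra.nonneg_iff_eq_star_mul_self.mp hA.inv.posSemidef.nonneg
  have hRu : IsUnit R := by
    have h := hA.inv.isUnit
    rw [hR] at h
    exact isUnit_of_mul_isUnit_right h
  refine ⟨R * C * Rᴴ, hC.mul_mul_conjTranspose_same (vecMul_injective_of_isUnit hRu), ?_⟩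
  rw [hR, star_eq_conjTranspose, Matrix.mul_assoc Rᴴ]
  exact ⟨charpoly_mul_comm _ _, trace_mul_comm _ _, det_mul_comm _ _⟩

theorem stmt17 {n q : ℕ} (B : Matrix (Fin n) (Fin n) ℝ) (hB : B.PosDef)
    (S : Matrix (Fin n) (Fin q) ℝ) (hS : S.rank = q) :
    (∀ μ : ℂ,
        (((Sᵀ * B * S)⁻¹ * (Sᵀ * (B * B) * S)).map ((↑) : ℝ → ℂ)).charpoly.IsRoot μ →
        μ.im = 0 ∧ 0 < μ.re) ∧
    (q : ℝ) - Matrix.trace ((Sᵀ * B * S)⁻¹ * (Sᵀ * (B * B) * S))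
      + Real.log (((Sᵀ * B * S)⁻¹ * (Sᵀ * (B * B) * S)).det) ≤ 0 := by
  have hinj := mulVec_injective_of_rank_eq hS
  have hA : (Sᵀ * B * S).PosDef := by
    simpa [conjTranspose_eq_transpose_of_trivial] using hB.conjTranspose_mul_mul_same hinj
  have hBB : (B * B).PosDef := by
    have h := PosDef.conjTranspose_mul_self B (mulVec_injective_of_isUnit hB.isUnit)
    rwa [hB.isHermitian.eq] at h
  have hC : (Sᵀ * (B * B) * S).PosDef := by
    simpa [conjTranspose_eq_transpose_of_trivial] using hBB.conjTranspose_mul_mul_same hinj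
  obtain ⟨N, hN, hchar, htr, hdet⟩ := exists_posDef_similar hA hC
  generalize (Sᵀ * B * S)⁻¹ * (Sᵀ * (B * B) * S) = M at *
  constructor
  · intro μ hμ
    have hmap : (M.map ((↑) : ℝ → ℂ)).charpoly = M.charpoly.map Complex.ofRealHom :=
      charpoly_map M Complex.ofRealHom
    rw [hmap, hchar, hN.isHermitian.charpoly_eq, Polynomial.IsRoot.def, Polynomial.eval_map,
      Polynomial.eval₂_finsetProd, Finset.prod_eq_zero_iff] at hμ
    obtain ⟨i, -, hi⟩ := hμ
    have hμi : μ = (hN.isHermitian.eigenvalues i : ℂ) := by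
      simpa [sub_eq_zero] using hi
    rw [hμi]
    exact ⟨Complex.ofReal_im _, by simpa using hN.eigenvalues_pos i⟩
  · rw [htr, hdet, hN.isHermitian.trace_eq_sum_eigenvalues,
      hN.isHermitian.det_eq_prod_eigenvalues]
    simp only [RCLike.ofReal_real_eq_id, id_eq]
    rw [Real.log_prod fun i _ => (hN.eigenvalues_pos i).ne']
    have h := Finset.sum_le_sum fun i (_ : i ∈ Finset.univ) =>
      Real.log_le_sub_one_of_pos (hN.eigenvalues_pos i)
    simp only [Finset.sum_sub_distrib, Finset.sum_const, Finset.card_univ, Fintype.card_fin,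
      nsmul_eq_mul, mul_one] at h
    linarith
end

section
/- Let B be a symmetric positive definite n×n real matrix and let S be an n×q real matrix of full column rank q. Then det(SᵀBS)² ≤ det(SᵀB²S) · det(SᵀS). -/
open Matrix

/-!
With `K = SᵀS` and `A = SᵀBS`, both positive definite, the Schur complement
`SᵀB²S - A K⁻¹ A` equals `FᵀF`, where `F = (1 - S K⁻¹ Sᵀ) B S` is the component of `BS`
orthogonal to the column space of `S`. Hence `SᵀB²S = A K⁻¹ A + FᵀF` has determinant at least
`det (A K⁻¹ A) = (det A)² / det K`, since adding a Gram matrix to a positive definite matrix does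
not decrease the determinant (`det_le_det_add_gram`).
-/

/-- Every eigenvalue of `1 + W` is at least `1`; the product of these eigenvalues is read off from
the characteristic polynomial of `W` at `-1`. -/
lemma one_le_det_one_add {n : ℕ} {W : Matrix (Fin n) (Fin n) ℝ} (hW : W.PosSemidef) :
    1 ≤ (1 + W).det := by
  have h := congrArg (Polynomial.eval (-1)) hW.isHermitian.charpoly_eq
  have hneg : Matrix.scalar (Fin n) (-1 : ℝ) - W = -(1 + W) := by
    rw [map_neg, map_one]; abel
  rw [Matrix.eval_charpoly, hneg, Matrix.det_neg, Polynomial.eval_prod] at h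
  have hprod : ∏ i, Polynomial.eval (-1)
        (Polynomial.X - Polynomial.C ((hW.isHermitian.eigenvalues i : ℝ)))
      = (-1) ^ Fintype.card (Fin n) * ∏ i, (1 + hW.isHermitian.eigenvalues i) := by
    rw [← Finset.card_univ, ← Finset.prod_const, ← Finset.prod_mul_distrib]
    refine Finset.prod_congr rfl fun i _ => ?_
    simp only [Polynomial.eval_sub, Polynomial.eval_X, Polynomial.eval_C]
    ring
  have h2 := mul_left_cancel₀ (pow_ne_zero _ (by norm_num : (-1 : ℝ) ≠ 0)) (h.trans hprod)
  rw [h2]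
  calc (1 : ℝ) = ∏ _i : Fin n, (1 : ℝ) := Finset.prod_const_one.symm
    _ ≤ _ := Finset.prod_le_prod (fun _ _ => zero_le_one)
      fun i _ => by linarith [hW.eigenvalues_nonneg i]

/-- Factor out `det C`: what is left is `det (1 + F C⁻¹ Fᵀ)`, with `F C⁻¹ Fᵀ` positive
semidefinite. -/
lemma det_le_det_add_gram {n q : ℕ} {C : Matrix (Fin q) (Fin q) ℝ} (hC : C.PosDef)
    (F : Matrix (Fin n) (Fin q) ℝ) : C.det ≤ (C + Fᵀ * F).det := by
  rw [Matrix.det_add_mul _ _ hC.det_pos.ne'.isUnit]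
  have hW : (F * C⁻¹ * Fᵀ).PosSemidef := by
    simpa using hC.inv.posSemidef.mul_mul_conjTranspose_same F
  exact le_mul_of_one_le_right hC.det_pos.le (one_le_det_one_add hW)

theorem stmt18 {n q : ℕ} (B : Matrix (Fin n) (Fin n) ℝ) (hB : B.PosDef)
    (S : Matrix (Fin n) (Fin q) ℝ) (hS : S.rank = q) :
    (Sᵀ * B * S).det ^ 2 ≤ (Sᵀ * (B * B) * S).det * (Sᵀ * S).det := by
  have hinj : Function.Injective S.mulVec := by
    rw [Matrix.mulVec_injective_iff, linearIndependent_iff_card_eq_finrank_span,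
      Set.finrank, ← Matrix.rank_eq_finrank_span_cols, hS, Fintype.card_fin]
  have hK : (Sᵀ * S).PosDef := by
    simpa using Matrix.PosDef.conjTranspose_mul_self S hinj
  have hA : (Sᵀ * B * S).PosDef := by
    simpa using hB.conjTranspose_mul_mul_same hinj
  have hBt : Bᵀ = B := by simpa using hB.isHermitian.eq
  have hKt : ((Sᵀ * S)⁻¹)ᵀ = (Sᵀ * S)⁻¹ := by
    rw [Matrix.transpose_nonsing_inv, Matrix.transpose_mul, Matrix.transpose_transpose]
  have hAt : (Sᵀ * B * S)ᵀ = Sᵀ * B * S := by simpa using hA.isHermitian.eq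
  have hKd := hK.det_pos
  have hAinj : Function.Injective (Sᵀ * B * S).mulVec :=
    Matrix.mulVec_injective_of_det_ne_zero hA.det_pos.ne'
  have hC : ((Sᵀ * B * S) * (Sᵀ * S)⁻¹ * (Sᵀ * B * S)).PosDef := by
    have h := hK.inv.conjTranspose_mul_mul_same hAinj
    rwa [Matrix.conjTranspose_eq_transpose_of_trivial, hAt] at h
  have hKinv : (Sᵀ * S) * (Sᵀ * S)⁻¹ = 1 := Matrix.mul_nonsing_inv _ hKd.ne'.isUnit
  have hdec : Sᵀ * (B * B) * S = (Sᵀ * B * S) * (Sᵀ * S)⁻¹ * (Sᵀ * B * S)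
      + (B * S - S * (Sᵀ * S)⁻¹ * (Sᵀ * B * S))ᵀ
        * (B * S - S * (Sᵀ * S)⁻¹ * (Sᵀ * B * S)) := by
    -- The columns of `F = BS - S K⁻¹ A` are orthogonal to those of `S`.
    have horth : Sᵀ * (B * S - S * (Sᵀ * S)⁻¹ * (Sᵀ * B * S)) = 0 := by
      rw [Matrix.mul_sub, ← Matrix.mul_assoc Sᵀ (S * _), ← Matrix.mul_assoc Sᵀ S, hKinv,
        Matrix.one_mul, Matrix.mul_assoc, sub_self]
    have hFt : (B * S - S * (Sᵀ * S)⁻¹ * (Sᵀ * B * S))ᵀ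
        = Sᵀ * B - (Sᵀ * B * S) * (Sᵀ * S)⁻¹ * Sᵀ := by
      rw [Matrix.transpose_sub, Matrix.transpose_mul, Matrix.transpose_mul (S * _), hAt,
        Matrix.transpose_mul, hKt, hBt, Matrix.mul_assoc (Sᵀ * B * S)]
    rw [hFt, Matrix.sub_mul, Matrix.mul_assoc _ Sᵀ (_ - _), horth, Matrix.mul_zero, sub_zero,
      Matrix.mul_sub]
    simp only [Matrix.mul_assoc]
    abel
  have hle := det_le_det_add_gram hC (B * S - S * (Sᵀ * S)⁻¹ * (Sᵀ * B * S))
  rw [← hdec, Matrix.det_mul, Matrix.det_mul, Matrix.det_nonsing_inv,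
    Ring.inverse_eq_inv'] at hle
  calc (Sᵀ * B * S).det ^ 2
      = (Sᵀ * B * S).det * (Sᵀ * S).det⁻¹ * (Sᵀ * B * S).det * (Sᵀ * S).det := by
        field_simp
    _ ≤ _ := mul_le_mul_of_nonneg_right hle hKd.le
end
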